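/- Let d ≥ 2 and let A := {x ∈ ℝ^d : (x₁² + x₂² + ⋯ + x_d² < 1 and x_d > 0), or ((x₁−3)² + x₂² + ⋯ + x_d² < 1 and x_d ≠ 0)}. Then A is not elementary open semi-algebraic: there exist no m ∈ ℕ and polynomials p₁,…,p_m ∈ ℝ[x₁,…,x_d] with A = (p₁,…,p_m)_{>0}. -/

import Mathlib

open MvPolynomial

/-! Along a hyperplane, say `x j = 0`, a polynomial `p` has the sign of `(x j) ^ n * c` near every
point where `c ≠ 0`; here `n` is the order of vanishing along the hyperplane and `c` the restriction
of `p / (x j) ^ n` to it. So whether `p` changes sign across the hyperplane depends only on the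
parity of `n`, not on the place where one crosses. Near `(3, 0, …, 0)` the set of the theorem
contains both sides of `x_d = 0`, which forces every `n` to be even; near the origin it contains one
side, hence it would have to reach the other side as well. -/

section BivariateSign

open Filter Topology SignType
open scoped Polynomial Polynomial.Bivariate

variable {𝕜 : Type*} [Field 𝕜] [LinearOrder 𝕜] [IsStrictOrderedRing 𝕜] [TopologicalSpace 𝕜]
  [OrderTopology 𝕜]

theorem eventually_sign_eval_eq_of_X_pow_dvd {p : 𝕜[X]} {n : ℕ} (hdvd : Polynomial.X ^ n ∣ p)
    (hn : p.coeff n ≠ 0) : ∀ᶠ t in 𝓝 0, sign (p.eval t) = sign t ^ n * sign (p.coeff n) := by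
  obtain ⟨q, rfl⟩ := hdvd
  have hcoeff : (Polynomial.X ^ n * q).coeff n = q.eval 0 := by
    rw [Polynomial.coeff_X_pow_mul', if_pos le_rfl, Nat.sub_self,
      Polynomial.coeff_zero_eq_eval_zero]
  rw [hcoeff] at hn ⊢
  have hsign : ∀ᶠ t in 𝓝 0, sign (q.eval t) = sign (q.eval 0) := by
    have hcont : ContinuousAt (fun t ↦ sign (q.eval t)) 0 :=
      ContinuousAt.comp (f := q.eval) (continuousAt_sign_of_ne_zero hn) q.continuousAt
    simpa [ContinuousAt, nhds_discrete] using hcont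
  filter_upwards [hsign] with t ht
  rw [Polynomial.eval_mul, Polynomial.eval_pow, Polynomial.eval_X, sign_mul, sign_pow, ht]

theorem eventually_cofinite_sign_evalEval_eq (P : 𝕜[X][Y]) :
    ∀ᶠ s in cofinite, ∀ᶠ t in 𝓝 0, sign (P.evalEval s t) =
      sign t ^ P.natTrailingDegree * sign (P.trailingCoeff.eval s) := by
  rcases eq_or_ne P 0 with rfl | hP
  · simp
  have hroots : ∀ᶠ s in cofinite, ¬ P.trailingCoeff.IsRoot s :=
    (Polynomial.finite_setOfPred_isRoot
      (Polynomial.trailingCoeff_nonzero_iff_nonzero.2 hP)).eventually_cofinite_notMem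
  have hdvd : Polynomial.X ^ P.natTrailingDegree ∣ P :=
    Polynomial.X_pow_dvd_iff.2 fun _ ↦ Polynomial.coeff_eq_zero_of_lt_natTrailingDegree
  filter_upwards [hroots] with s hs
  have hdvd_map := Polynomial.map_dvd (Polynomial.evalRingHom s) hdvd
  rw [Polynomial.map_pow, Polynomial.map_X] at hdvd_map
  have hcoeff : (P.map (Polynomial.evalRingHom s)).coeff P.natTrailingDegree =
      P.trailingCoeff.eval s := Polynomial.coeff_map _ _
  simpa only [hcoeff, Polynomial.map_evalRingHom_eval] using
    eventually_sign_eval_eq_of_X_pow_dvd hdvd_map (hcoeff ▸ hs)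

theorem eventually_cofinite_evalEval_pos_right_iff (P : 𝕜[X][Y]) :
    ∀ᶠ s in cofinite, (∀ᶠ t in 𝓝[>] 0, 0 < P.evalEval s t) ↔ 0 < P.trailingCoeff.eval s := by
  filter_upwards [eventually_cofinite_sign_evalEval_eq P] with s hs
  rw [← eventually_const (f := 𝓝[>] (0 : 𝕜)) (p := 0 < P.trailingCoeff.eval s)]
  refine eventually_congr ?_
  filter_upwards [nhdsWithin_le_nhds hs, self_mem_nhdsWithin] with t ht ht0
  rw [← sign_eq_one_iff, ht, sign_pos ht0, one_pow, one_mul, sign_eq_one_iff]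

theorem eventually_cofinite_evalEval_pos_left_iff (P : 𝕜[X][Y]) :
    ∀ᶠ s in cofinite, (∀ᶠ t in 𝓝[<] 0, 0 < P.evalEval s t) ↔
      0 < (-1) ^ P.natTrailingDegree * P.trailingCoeff.eval s := by
  filter_upwards [eventually_cofinite_sign_evalEval_eq P] with s hs
  rw [← eventually_const (f := 𝓝[<] (0 : 𝕜))
    (p := 0 < (-1) ^ P.natTrailingDegree * P.trailingCoeff.eval s)]
  refine eventually_congr ?_
  filter_upwards [nhdsWithin_le_nhds hs, self_mem_nhdsWithin] with t ht ht0
  rw [← sign_eq_one_iff, ht, sign_neg ht0, ← sign_eq_one_iff, sign_mul, sign_pow,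
    sign_neg neg_one_lt_zero]

theorem eventually_cofinite_evalEval_pos_left_of_pos_right {P : 𝕜[X][Y]}
    (hP : ∃ᶠ s in cofinite, ∀ᶠ t in 𝓝[≠] 0, 0 < P.evalEval s t) :
    ∀ᶠ s in cofinite, (∀ᶠ t in 𝓝[>] 0, 0 < P.evalEval s t) →
      ∀ᶠ t in 𝓝[<] 0, 0 < P.evalEval s t := by
  have hsides := (eventually_cofinite_evalEval_pos_right_iff P).and
    (eventually_cofinite_evalEval_pos_left_iff P)
  have neg_one_pow_pos : 0 < (-1 : 𝕜) ^ P.natTrailingDegree := by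
    obtain ⟨s, hpos, hright, hleft⟩ := (hP.and_eventually hsides).exists
    exact pos_of_mul_pos_left (hleft.1 (hpos.filter_mono (nhdsLT_le_nhdsNE 0)))
      (hright.1 (hpos.filter_mono (nhdsGT_le_nhdsNE 0))).le
  filter_upwards [hsides] with s ⟨hright, hleft⟩ hpos
  exact hleft.2 (mul_pos neg_one_pow_pos (hright.1 hpos))

end BivariateSign

section HyperplaneCrossing

open Filter Topology
open scoped Polynomial.Bivariate

theorem evalEval_aeval {R σ : Type*} [CommSemiring R] (f : σ → R[X][Y]) (p : MvPolynomial σ R)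
    (s t : R) : (aeval f p).evalEval s t = eval (fun k ↦ (f k).evalEval s t) p := by
  have hC : (Polynomial.evalEvalRingHom s t).comp (algebraMap R R[X][Y]) = RingHom.id R := by
    ext a
    simp [IsScalarTower.algebraMap_apply R (Polynomial R) R[X][Y]]
  have h := map_aeval f (Polynomial.evalEvalRingHom s t) p
  rw [hC] at h
  exact h

theorem exists_evalEval_eq_eval_add_smul_add_smul {R σ : Type*} [CommSemiring R]
    (p : MvPolynomial σ R) (u v w : σ → R) :
    ∃ P : R[X][Y], ∀ s t, P.evalEval s t = eval (u + s • v + t • w) p := by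
  refine ⟨aeval (fun k ↦ Polynomial.C (Polynomial.C (u k) + Polynomial.C (v k) * Polynomial.X)
    + Polynomial.C (Polynomial.C (w k)) * Polynomial.X) p, fun s t ↦ ?_⟩
  rw [evalEval_aeval]
  congr 2
  ext k
  simp only [Polynomial.evalEval_add, Polynomial.evalEval_mul, Polynomial.evalEval_C,
    Polynomial.evalEval_X, Polynomial.eval_add, Polynomial.eval_mul, Polynomial.eval_C,
    Polynomial.eval_X, Pi.add_apply, Pi.smul_apply, smul_eq_mul, mul_comm]

theorem eventually_nhdsNE_add_smul_add_smul {R M : Type*} [Semiring R] [TopologicalSpace R]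
    [AddCommMonoid M] [Module R M] [TopologicalSpace M] [ContinuousAdd M] [ContinuousSMul R M]
    {u v w : M} {a : R} {Q : M → Prop} (hQ : ∀ᶠ x in 𝓝 (u + a • v), Q x) :
    ∀ᶠ s in 𝓝[≠] a, ∀ᶠ t in 𝓝 (0 : R), Q (u + s • v + t • w) := by
  have hcont : Continuous fun q : R × R ↦ u + q.1 • v + q.2 • w := by fun_prop
  have hlim := hcont.tendsto (a, 0)
  rw [zero_smul, add_zero] at hlim
  exact nhdsWithin_le_nhds (hlim.eventually hQ).curry_nhds

variable {𝕜 σ ι : Type*} [Field 𝕜] [LinearOrder 𝕜] [IsStrictOrderedRing 𝕜] [Finite ι]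

theorem frequently_neg_and_eval_pos_of_eventually [TopologicalSpace 𝕜] [OrderTopology 𝕜]
    {p : ι → MvPolynomial σ 𝕜} {j : σ} {u v : σ → 𝕜} (huj : u j = 0) (hvj : v j = 0)
    (hu : ∀ᶠ x in 𝓝 u, x j ≠ 0 → ∀ i, 0 < eval x (p i))
    (hv : ∀ᶠ x in 𝓝 v, 0 < x j → ∀ i, 0 < eval x (p i)) :
    ∃ᶠ x in 𝓝 v, x j < 0 ∧ ∀ i, 0 < eval x (p i) := by
  classical
  choose P hP using fun i ↦
    exists_evalEval_eq_eval_add_smul_add_smul (p i) u (v - u) (Pi.single j 1)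
  have hxj (s t : 𝕜) : (u + s • (v - u) + t • Pi.single j 1 : σ → 𝕜) j = t := by simp [huj, hvj]
  have hcross (i : ι) := eventually_cofinite_evalEval_pos_left_of_pos_right (P := P i) <| by
    refine Frequently.filter_mono (Eventually.frequently ?_) (nhdsNE_le_cofinite 0)
    filter_upwards [eventually_nhdsNE_add_smul_add_smul (u := u) (a := 0) (by simpa using hu)]
      with s hs
    filter_upwards [nhdsWithin_le_nhds hs, self_mem_nhdsWithin] with t ht ht0
    rw [hP]
    exact ht ((hxj s t).trans_ne ht0) i
  intro hneg
  have hv1 : u + (1 : 𝕜) • (v - u) = v := by simp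
  rw [← hv1] at hv hneg
  obtain ⟨s, ⟨hs, hs_neg⟩, hs_cross⟩ := (((eventually_nhdsNE_add_smul_add_smul hv).and
    (eventually_nhdsNE_add_smul_add_smul hneg)).and
      (nhdsNE_le_cofinite 1 (eventually_all.2 hcross))).exists
  have hleft : ∀ᶠ t in 𝓝[<] 0, ∀ i, 0 < (P i).evalEval s t := by
    refine eventually_all.2 fun i ↦ hs_cross i ?_
    filter_upwards [nhdsWithin_le_nhds hs, self_mem_nhdsWithin] with t ht ht0
    rw [hP]
    exact ht (ht0.trans_eq (hxj s t).symm) i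
  obtain ⟨t, ⟨hPt, ht⟩, ht0⟩ :=
    ((hleft.and (nhdsWithin_le_nhds hs_neg)).and self_mem_nhdsWithin).exists
  exact ht ⟨(hxj s t).trans_lt ht0, fun i ↦ hP i s t ▸ hPt i⟩

theorem not_elementary_open_general [Fintype σ] [DecidableEq σ] {a l : σ} (hal : a ≠ l)
    (p : ι → MvPolynomial σ 𝕜) :
    {x : σ → 𝕜 | (∑ k, x k ^ 2 < 1 ∧ 0 < x l) ∨
      ((x a - 3) ^ 2 + ∑ k ∈ Finset.univ.erase a, x k ^ 2 < 1 ∧ x l ≠ 0)} ≠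
    {x | ∀ i, 0 < eval x (p i)} := by
  intro h
  let : TopologicalSpace 𝕜 := Preorder.topology 𝕜
  have : OrderTopology 𝕜 := ⟨rfl⟩
  let f (x : σ → 𝕜) : 𝕜 := (x a - 3) ^ 2 + ∑ k ∈ Finset.univ.erase a, x k ^ 2
  have hf : Continuous f := by fun_prop
  have hg : Continuous fun x : σ → 𝕜 ↦ ∑ k, x k ^ 2 := by fun_prop
  have hfa : f (Pi.single a 3) = 0 := by
    simp +contextual [f, Pi.single_apply]
  have hg0 : ∑ k, (0 : σ → 𝕜) k ^ 2 = 0 := by simp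
  have hf0 : f 0 = 9 := by norm_num [f]
  have hu : ∀ᶠ x in 𝓝 (Pi.single a 3), x l ≠ 0 → ∀ i, 0 < eval x (p i) := by
    filter_upwards [hf.continuousAt.eventually_lt_const (hfa.trans_lt one_pos)] with x hx hxl
    exact h.subset (Or.inr ⟨hx, hxl⟩)
  have hv : ∀ᶠ x in 𝓝 0, 0 < x l → ∀ i, 0 < eval x (p i) := by
    filter_upwards [hg.continuousAt.eventually_lt_const (hg0.trans_lt one_pos)] with x hx hxl
    exact h.subset (Or.inl ⟨hx, hxl⟩)
  have hfar : ∀ᶠ x in 𝓝 0, 1 < f x :=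
    hf.continuousAt.eventually_const_lt (by rw [hf0]; norm_num)
  obtain ⟨x, ⟨hxl, hx⟩, hfx⟩ := ((frequently_neg_and_eval_pos_of_eventually
    (Pi.single_eq_of_ne hal.symm 3) (Pi.zero_apply l) hu hv).and_eventually hfar).exists
  rcases h.superset hx with ⟨-, hpos⟩ | ⟨hlt, -⟩
  · exact hpos.not_gt hxl
  · exact hlt.not_gt hfx

end HyperplaneCrossing

/-- The set `A = {x ∈ ℝ^d : (x₁² + ⋯ + x_d² < 1 and x_d > 0), or
((x₁−3)² + x₂² + ⋯ + x_d² < 1 and x_d ≠ 0)}` is an open semi-algebraic set which is not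
elementary open: it admits no representation `A = (p₁,…,p_m)_{>0}`. -/
theorem not_elementary_open
    (d : ℕ) (hd : 2 ≤ d)
    (A : Set (EuclideanSpace ℝ (Fin d)))
    (hA : A = {x : EuclideanSpace ℝ (Fin d) |
      ((∑ i, x i ^ 2) < 1 ∧ 0 < x ⟨d - 1, by omega⟩) ∨
      ((x ⟨0, by omega⟩ - 3) ^ 2
          + ∑ i ∈ Finset.univ.erase (⟨0, by omega⟩ : Fin d), x i ^ 2 < 1 ∧
        x ⟨d - 1, by omega⟩ ≠ 0)}) :
    ¬ ∃ (m : ℕ) (p : Fin m → MvPolynomial (Fin d) ℝ),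
        A = {x : EuclideanSpace ℝ (Fin d) | ∀ i, 0 < eval x (p i)} := by
  rintro ⟨m, p, hp⟩
  refine not_elementary_open_general (a := ⟨0, by omega⟩) (l := ⟨d - 1, by omega⟩)
    (by rw [ne_eq, Fin.mk.injEq]; omega) p (Set.ext fun x ↦ ?_)
  exact Set.ext_iff.1 (hA.symm.trans hp) (WithLp.toLp 2 x)
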